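/- Let ρ₀ satisfy the stated first-order equation with limits a and b at ∓∞. Let v : ℝ → ℝ be twice continuously differentiable and bounded with lim_{z→±∞} v'(z) = 0, let h : ℝ → ℝ be continuous with ∫_ℝ |h(z)ρ₀(z)| dz < ∞, and suppose −v''(z) + f_B(ρ₀(z))v(z) = h(z) for all z ∈ ℝ. Then ∫_ℝ h(z) ρ₀(z) dz = 0. -/

import Mathlib

open Filter MeasureTheory

/-- `f_B(ρ) = (ρ² − a²)(ρ² − b²)(2ρ² − a² − b²)`. -/
noncomputable def fB (a b ρ : ℝ) : ℝ :=
  (ρ ^ 2 - a ^ 2) * (ρ ^ 2 - b ^ 2) * (2 * ρ ^ 2 - a ^ 2 - b ^ 2)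

/-- (Compatibility condition for the `f_B` operator.) If `v` is `C²`,
bounded, with `v'(±∞) = 0`, `h` continuous with `h ρ₀` integrable, and
`−v'' + f_B(ρ₀)v = h`, then `∫_ℝ h ρ₀ = 0`. -/
theorem statement10 (a b : ℝ) (ha : 0 < a) (hab : a < b) (ρ₀ : ℝ → ℝ)
    (hreg : ContDiff ℝ 1 ρ₀)
    (hderiv : ∀ z, deriv ρ₀ z =
      Real.sqrt 2 / 2 * ((ρ₀ z) ^ 2 - a ^ 2) * (b ^ 2 - (ρ₀ z) ^ 2))
    (hbnd : ∀ z, a < ρ₀ z ∧ ρ₀ z < b)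
    (hbot : Tendsto ρ₀ atBot (nhds a))
    (htop : Tendsto ρ₀ atTop (nhds b))
    (v h : ℝ → ℝ) (hv : ContDiff ℝ 2 v)
    (hvbd : ∃ M, ∀ z, |v z| ≤ M)
    (hv'top : Tendsto (deriv v) atTop (nhds 0))
    (hv'bot : Tendsto (deriv v) atBot (nhds 0))
    (hh : Continuous h)
    (hint : Integrable (fun z => h z * ρ₀ z))
    (heq : ∀ z, -(deriv (deriv v) z) + fB a b (ρ₀ z) * v z = h z) :
    (∫ z : ℝ, h z * ρ₀ z) = 0 := by
  obtain ⟨M, hM⟩ := hvbd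
  have hρ : ∀ z, HasDerivAt ρ₀ (deriv ρ₀ z) z := fun z =>
    ((hreg.differentiable (by norm_num)) z).hasDerivAt
  have hv1 : ∀ z, HasDerivAt v (deriv v z) z := fun z =>
    ((hv.differentiable (by norm_num)) z).hasDerivAt
  have hdv : ContDiff ℝ 1 (deriv v) := by
    have h2 : ContDiff ℝ (1 + 1) v := by
      have : (1 + 1 : WithTop ℕ∞) = 2 := by norm_num
      rw [this]; exact hv
    exact (contDiff_succ_iff_deriv.1 h2).2.2
  have hv2 : ∀ z, HasDerivAt (deriv v) (deriv (deriv v) z) z := fun z =>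
    ((hdv.differentiable (by norm_num)) z).hasDerivAt
  have hs : Real.sqrt 2 ^ 2 = 2 := Real.sq_sqrt (by norm_num)
  let G : ℝ → ℝ := fun z =>
    Real.sqrt 2 / 2 * ((ρ₀ z) ^ 2 - a ^ 2) * (b ^ 2 - (ρ₀ z) ^ 2)
  have hG : ∀ z, HasDerivAt G (fB a b (ρ₀ z) * ρ₀ z) z := by
    intro z
    have h1 := ((((hρ z).pow 2).sub_const (a ^ 2)).const_mul (Real.sqrt 2 / 2)).mul
      (((hρ z).pow 2).const_sub (b ^ 2))
    refine h1.congr_deriv ?_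
    rw [hderiv z]
    simp only [fB, Pi.pow_apply]
    norm_num
    linear_combination (ρ₀ z * (ρ₀ z ^ 2 - a ^ 2) * (b ^ 2 - ρ₀ z ^ 2)
      * (a ^ 2 + b ^ 2 - 2 * ρ₀ z ^ 2) / 2) * hs
  have hF : ∀ z, HasDerivAt (fun z => v z * G z - deriv v z * ρ₀ z) (h z * ρ₀ z) z := by
    intro z
    refine (((hv1 z).mul (hG z)).sub ((hv2 z).mul (hρ z))).congr_deriv ?_
    rw [← heq z, hderiv z]
    simp only [G]
    ring
  have key : ∀ (l : Filter ℝ) (c : ℝ), (c ^ 2 - a ^ 2) * (b ^ 2 - c ^ 2) = 0 →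
      Tendsto ρ₀ l (nhds c) → Tendsto (deriv v) l (nhds 0) →
      Tendsto (fun z => v z * G z - deriv v z * ρ₀ z) l (nhds 0) := by
    intro l c hc h1 h2
    have hG0 : Tendsto G l (nhds 0) := by
      have := (((h1.pow 2).sub_const (a ^ 2)).const_mul (Real.sqrt 2 / 2)).mul
        ((h1.pow 2).const_sub (b ^ 2))
      rwa [mul_assoc, hc, mul_zero] at this
    have h3 : Tendsto (fun z => v z * G z) l (nhds 0) := by
      have h4 : Tendsto (fun z => M * |G z|) l (nhds 0) := by
        simpa using hG0.abs.const_mul M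
      refine squeeze_zero_norm (fun z => ?_) h4
      rw [Real.norm_eq_abs, abs_mul]
      exact mul_le_mul_of_nonneg_right (hM z) (abs_nonneg _)
    simpa using h3.sub (h2.mul h1)
  have := integral_of_hasDerivAt_of_tendsto hF hint
    (key atBot a (by ring) hbot hv'bot) (key atTop b (by ring) htop hv'top)
  simpa using this
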